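/- If m ≡ 0 or 5 (mod 6) and m, n ≥ 3, then the 2-distance paired domination number satisfies γ_p^2(f_{n×m}) = 2·⌈(nm - 3n)/6⌉. -/

import Mathlib

abbrev FlowerVert (n m : ℕ) := ZMod n ⊕ ZMod n × Fin (m - 2)

def flowerRel (n m : ℕ) : FlowerVert n m → FlowerVert n m → Prop
  | Sum.inl i, Sum.inl i' => i' = i + 1
  | Sum.inl i, Sum.inr (i', j) => (i' = i ∧ j.val = 0) ∨ (i = i' + 1 ∧ j.val = m - 3)
  | Sum.inr (i, j), Sum.inr (i', j') => i' = i ∧ j'.val = j.val + 1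
  | _, _ => False

/-- The flower graph `f_{n×m}`. -/
def flowerGraph (n m : ℕ) : SimpleGraph (FlowerVert n m) :=
  SimpleGraph.fromRel (flowerRel n m)

/-- `D` is a paired dominating set of `G`. -/
def IsPairedDominating {V : Type*} (G : SimpleGraph V) (D : Set V) : Prop :=
  (∀ v ∉ D, ∃ u ∈ D, G.Adj u v) ∧
  ∃ M : G.Subgraph, M.verts = D ∧ M.IsMatching

/-- `D` is a `k`-distance paired dominating set of `G`. -/
def IsKDistPairedDominating {V : Type*} (G : SimpleGraph V) (k : ℕ) (D : Set V) : Prop :=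
  (∀ v ∉ D, ∃ u ∈ D, G.edist u v ≤ k) ∧
  ∃ M : G.Subgraph, M.verts = D ∧ M.IsMatching

/-- The paired domination number `γ_p(G)`. -/
noncomputable def pairedDomNum {V : Type*} (G : SimpleGraph V) : ℕ :=
  sInf {c | ∃ D : Set V, IsPairedDominating G D ∧ D.ncard = c}

/-- The `k`-distance paired domination number `γ_p^k(G)`. -/
noncomputable def kDistPairedDomNum {V : Type*} (G : SimpleGraph V) (k : ℕ) : ℕ :=
  sInf {c | ∃ D : Set V, IsKDistPairedDominating G k D ∧ D.ncard = c}

/-- The `k`-distance domination number `γ^k(G)`. -/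
noncomputable def kDistDomNum {V : Type*} (G : SimpleGraph V) (k : ℕ) : ℕ :=
  sInf {c | ∃ D : Set V, (∀ v ∉ D, ∃ u ∈ D, G.edist u v ≤ k) ∧ D.ncard = c}

section aux

lemma flower_nat_petal (m : ℕ) (hm : 5 ≤ m) (P E : ℕ → Prop) [DecidablePred P]
    (XL XR PL PR : Prop) [Decidable XL] [Decidable XR] [Decidable PL] [Decidable PR]
    (hE : ∀ j, E j → P j ∧ P (j + 1) ∧ j + 1 < m - 2)
    (hEE : ∀ j, E j → ¬ E (j + 1))
    (hPL : PL → P 0 ∧ ¬ E 0) (hPR : PR → P (m - 3) ∧ ¬ E (m - 4))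
    (hP : ∀ j, P j → E j ∨ (∃ i, j = i + 1 ∧ E i) ∨ (j = 0 ∧ PL) ∨ (j = m - 3 ∧ PR))
    (hD : ∀ j, 1 ≤ j → j ≤ m - 4 →
      (∃ j', P j' ∧ j ≤ j' + 2 ∧ j' ≤ j + 2) ∨ (j = 1 ∧ XL) ∨ (j = m - 4 ∧ XR))
    (hLX : PL → XL) (hRX : PR → XR) :
    ∃ a, m - 4 ≤ 6 * a + (if XL then 1 else 0) + (if XR then 1 else 0)
        + (if PL then 1 else 0) + (if PR then 1 else 0) ∧
      2 * a + (if PL then 1 else 0) + (if PR then 1 else 0)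
        ≤ ((Finset.range (m - 2)).filter P).card := by
  classical
  let Q := (Finset.range (m - 2)).filter E
  have hQ : ∀ j, j ∈ Q ↔ E j := by
    intro j
    simp only [Q, Finset.mem_filter, Finset.mem_range]
    constructor
    · exact fun h => h.2
    · intro h
      have := hE j h
      exact ⟨by omega, h⟩
  refine ⟨Q.card, ?_, ?_⟩
  · have hsub : Finset.Icc (1 + (if XL then 1 else 0) + (if PL then 1 else 0))
        (m - 4 - (if XR then 1 else 0) - (if PR then 1 else 0)) ⊆
        Q.biUnion (fun q => Finset.Icc (q - 2) (q + 3)) := by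
      intro j hj
      rw [Finset.mem_Icc] at hj
      rw [Finset.mem_biUnion]
      have hmem : ∃ q, E q ∧ q ≤ j + 2 ∧ j ≤ q + 3 := by
        rcases hD j (by omega) (by omega) with ⟨j', hj', h1, h2⟩ | ⟨h1, h2⟩ | ⟨h1, h2⟩
        · rcases hP j' hj' with h | ⟨i, h, h'⟩ | ⟨h, h'⟩ | ⟨h, h'⟩
          · exact ⟨j', h, by omega, by omega⟩
          · exact ⟨i, h', by omega, by omega⟩
          · exfalso
            rw [if_pos h', if_pos (hLX h')] at hj
            omega
          · exfalso
            rw [if_pos h', if_pos (hRX h')] at hj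
            omega
        · exfalso
          rw [if_pos h2] at hj
          omega
        · exfalso
          rw [if_pos h2] at hj
          omega
      obtain ⟨q, h1, h2, h3⟩ := hmem
      exact ⟨q, (hQ q).2 h1, by rw [Finset.mem_Icc]; omega⟩
    have h1 := Finset.card_le_card hsub
    have h2 : (Q.biUnion (fun q => Finset.Icc (q - 2) (q + 3))).card ≤ Q.card * 6 := by
      apply Finset.card_biUnion_le_card_mul
      intro q _
      rw [Nat.card_Icc]
      omega
    rw [Nat.card_Icc] at h1
    omega
  · let Q' := Q.image (fun j => j + 1)
    let A : Finset ℕ := if PL then {0} else ∅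
    let B : Finset ℕ := if PR then {m - 3} else ∅
    have hA : A.card = if PL then 1 else 0 := by
      simp only [A]; split_ifs <;> simp
    have hB : B.card = if PR then 1 else 0 := by
      simp only [B]; split_ifs <;> simp
    have hQ'c : Q'.card = Q.card := Finset.card_image_of_injective _ (fun a b h => by simpa using h)
    have hQ' : ∀ j, j ∈ Q' ↔ ∃ i, E i ∧ i + 1 = j := by
      intro j; simp only [Q', Finset.mem_image, hQ]
    have memA : ∀ j, j ∈ A ↔ (j = 0 ∧ PL) := by
      intro j; simp only [A]; split_ifs with h <;> simp [h]
    have memB : ∀ j, j ∈ B ↔ (j = m - 3 ∧ PR) := by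
      intro j; simp only [B]; split_ifs with h <;> simp [h]
    have d1 : Disjoint Q Q' := by
      rw [Finset.disjoint_left]
      intro j h1 h2
      rw [hQ] at h1
      obtain ⟨i, h3, rfl⟩ := (hQ' j).1 h2
      exact hEE i h3 h1
    have d2 : Disjoint (Q ∪ Q') A := by
      rw [Finset.disjoint_left]
      intro j h1 h2
      obtain ⟨rfl, h3⟩ := (memA j).1 h2
      rcases Finset.mem_union.1 h1 with h | h
      · exact (hPL h3).2 ((hQ 0).1 h)
      · obtain ⟨i, _, h5⟩ := (hQ' 0).1 h
        omega
    have d3 : Disjoint ((Q ∪ Q') ∪ A) B := by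
      rw [Finset.disjoint_left]
      intro j h1 h2
      obtain ⟨rfl, h3⟩ := (memB j).1 h2
      rcases Finset.mem_union.1 h1 with h | h
      · rcases Finset.mem_union.1 h with h | h
        · have := hE _ ((hQ _).1 h)
          omega
        · obtain ⟨i, h4, h5⟩ := (hQ' _).1 h
          have : i = m - 4 := by omega
          subst this
          exact (hPR h3).2 h4
      · have := (memA _).1 h
        omega
    have hsub : ((Q ∪ Q') ∪ A) ∪ B ⊆ (Finset.range (m - 2)).filter P := by
      intro j hj
      rw [Finset.mem_filter, Finset.mem_range]
      simp only [Finset.mem_union, hQ, hQ', memA, memB] at hj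
      rcases hj with ((h | ⟨i, h, rfl⟩) | ⟨rfl, h⟩) | ⟨rfl, h⟩
      · exact ⟨by have := hE j h; omega, (hE j h).1⟩
      · exact ⟨by have := hE i h; omega, (hE i h).2.1⟩
      · exact ⟨by omega, (hPL h).1⟩
      · exact ⟨by omega, (hPR h).1⟩
    have := Finset.card_le_card hsub
    rw [Finset.card_union_of_disjoint d3, Finset.card_union_of_disjoint d2,
      Finset.card_union_of_disjoint d1, hA, hB, hQ'c] at this
    omega

lemma flower_edist_two {V : Type*} (G : SimpleGraph V) (u v : V) :
    G.edist u v ≤ 2 ↔ u = v ∨ G.Adj u v ∨ ∃ w, G.Adj u w ∧ G.Adj w v := by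
  constructor
  · intro h
    have hne : G.edist u v ≠ ⊤ := by
      intro h'
      rw [h'] at h
      exact absurd h (by decide)
    obtain ⟨p, hp⟩ := SimpleGraph.exists_walk_of_edist_ne_top hne
    rw [← hp] at h
    have h' : p.length ≤ 2 := by exact_mod_cast h
    cases p with
    | nil => exact Or.inl rfl
    | cons a q =>
      cases q with
      | nil => exact Or.inr (Or.inl a)
      | cons b r =>
        cases r with
        | nil => exact Or.inr (Or.inr ⟨_, a, b⟩)
        | cons c s => simp at h'
  · rintro (rfl | h | ⟨w, h1, h2⟩)
    · simp
    · exact (SimpleGraph.edist_le (SimpleGraph.Walk.cons h .nil)).trans (by simp)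
    · exact (SimpleGraph.edist_le (SimpleGraph.Walk.cons h1 (SimpleGraph.Walk.cons h2 .nil))).trans
        (by simp)

variable {n m : ℕ}

lemma flower_adj_uu (hn : 3 ≤ n) (i i' : ZMod n) :
    (flowerGraph n m).Adj (Sum.inl i) (Sum.inl i') ↔ (i' = i + 1 ∨ i = i' + 1) := by
  have : Fact (1 < n) := ⟨by omega⟩
  simp only [flowerGraph, SimpleGraph.fromRel_adj, flowerRel]
  constructor
  · exact fun h => h.2
  · intro h
    refine ⟨?_, h⟩
    intro h'
    have h' := Sum.inl_injective h'
    subst h'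
    simp at h

lemma flower_adj_uv (i i' : ZMod n) (j : Fin (m - 2)) :
    (flowerGraph n m).Adj (Sum.inl i) (Sum.inr (i', j)) ↔
      ((i' = i ∧ j.val = 0) ∨ (i = i' + 1 ∧ j.val = m - 3)) := by
  simp [flowerGraph, SimpleGraph.fromRel_adj, flowerRel]

lemma flower_adj_vv (i i' : ZMod n) (j j' : Fin (m - 2)) :
    (flowerGraph n m).Adj (Sum.inr (i, j)) (Sum.inr (i', j')) ↔
      (i' = i ∧ (j'.val = j.val + 1 ∨ j.val = j'.val + 1)) := by
  simp only [flowerGraph, SimpleGraph.fromRel_adj, flowerRel]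
  constructor
  · rintro ⟨_, h | h⟩
    · exact ⟨h.1, Or.inl h.2⟩
    · exact ⟨h.1.symm, Or.inr h.2⟩
  · rintro ⟨rfl, h⟩
    refine ⟨?_, ?_⟩
    · intro h'
      have := (Prod.mk.inj (Sum.inr_injective h')).2
      subst this
      omega
    · rcases h with h | h
      · exact Or.inl ⟨rfl, h⟩
      · exact Or.inr ⟨rfl, h⟩

/-- the neighbours of a `v`-vertex, from the other side -/
lemma flower_adj_vu (i i' : ZMod n) (j : Fin (m - 2)) :
    (flowerGraph n m).Adj (Sum.inr (i', j)) (Sum.inl i) ↔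
      ((i' = i ∧ j.val = 0) ∨ (i = i' + 1 ∧ j.val = m - 3)) := by
  rw [SimpleGraph.adj_comm, flower_adj_uv]

lemma flower_card [NeZero n] (D : Set (FlowerVert n m))
    [DecidablePred (· ∈ D)]
    (P : ZMod n → ℕ → Prop) [∀ i, DecidablePred (P i)]
    (hP : ∀ i (j : Fin (m - 2)), P i j.val ↔ Sum.inr (i, j) ∈ D) :
    D.ncard = ∑ i : ZMod n, ((if Sum.inl i ∈ D then 1 else 0)
      + ((Finset.range (m - 2)).filter (P i)).card) := by
  classical
  have h1 : D.ncard = ∑ v : FlowerVert n m, if v ∈ D then 1 else 0 := by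
    rw [Set.ncard_eq_toFinset_card' D, Finset.sum_boole]
    simp only [Nat.cast_id]
    congr 1
    ext x
    simp
  rw [h1, Fintype.sum_sum_type, Fintype.sum_prod_type, Finset.sum_add_distrib]
  congr 1
  refine Finset.sum_congr rfl fun i _ => ?_
  rw [Finset.card_filter, Finset.sum_range]
  refine Finset.sum_congr rfl fun j _ => ?_
  simp only [hP]

lemma flower_petal (hm : 5 ≤ m) (M : (flowerGraph n m).Subgraph) (hM : M.IsMatching)
    (hD : ∀ v ∉ M.verts, ∃ u ∈ M.verts, (flowerGraph n m).edist u v ≤ 2) (i : ZMod n)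
    (PL PR : Prop) [Decidable PL] [Decidable PR]
    [Decidable (Sum.inl i ∈ M.verts)] [Decidable (Sum.inl (i + 1) ∈ M.verts)]
    [DecidablePred (fun j => ∃ h : j < m - 2, Sum.inr (i, ⟨j, h⟩) ∈ M.verts)]
    (hPL : PL ↔ M.Adj (Sum.inl i) (Sum.inr (i, ⟨0, by omega⟩)))
    (hPR : PR ↔ M.Adj (Sum.inl (i + 1)) (Sum.inr (i, ⟨m - 3, by omega⟩))) :
    ∃ a, m - 4 ≤ 6 * a + (if Sum.inl i ∈ M.verts then 1 else 0)
        + (if Sum.inl (i + 1) ∈ M.verts then 1 else 0)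
        + (if PL then 1 else 0) + (if PR then 1 else 0) ∧
      2 * a + (if PL then 1 else 0) + (if PR then 1 else 0)
        ≤ ((Finset.range (m - 2)).filter
          (fun j => ∃ h : j < m - 2, Sum.inr (i, ⟨j, h⟩) ∈ M.verts)).card := by
  apply flower_nat_petal m hm _
    (fun j => ∃ h : j + 1 < m - 2, M.Adj (Sum.inr (i, ⟨j, by omega⟩)) (Sum.inr (i, ⟨j + 1, h⟩)))
  · rintro j ⟨h, h'⟩
    exact ⟨⟨by omega, h'.fst_mem⟩, ⟨h, h'.snd_mem⟩, h⟩
  · rintro j ⟨h, h'⟩ ⟨h1, h2⟩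
    have := hM.eq_of_adj_left h'.symm h2
    simp at this
    omega
  · intro h
    rw [hPL] at h
    refine ⟨⟨by omega, h.snd_mem⟩, ?_⟩
    rintro ⟨h1, h2⟩
    have := hM.eq_of_adj_left h.symm h2
    simp at this
  · intro h
    rw [hPR] at h
    refine ⟨⟨by omega, h.snd_mem⟩, ?_⟩
    rintro ⟨h1, h2⟩
    have h3 : (⟨m - 4 + 1, h1⟩ : Fin (m - 2)) = ⟨m - 3, by omega⟩ := by
      ext; simp only; omega
    rw [h3] at h2
    have := hM.eq_of_adj_left h.symm h2.symm
    simp at this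
  · rintro j ⟨h, hj⟩
    obtain ⟨w, hw, -⟩ := hM hj
    have hadj := hw.adj_sub
    rcases w with i' | ⟨i', j'⟩
    · rw [flower_adj_vu] at hadj
      rcases hadj with ⟨rfl, h1⟩ | ⟨rfl, h1⟩
      · simp only at h1
        subst h1
        exact Or.inr (Or.inr (Or.inl ⟨rfl, hPL.2 hw.symm⟩))
      · simp only at h1
        subst h1
        exact Or.inr (Or.inr (Or.inr ⟨rfl, hPR.2 hw.symm⟩))
    · rw [flower_adj_vv] at hadj
      obtain ⟨rfl, h1 | h1⟩ := hadj
      · left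
        obtain ⟨j', hj'⟩ := j'
        simp only at h1
        subst h1
        exact ⟨hj', hw⟩
      · right; left
        obtain ⟨j', hj'⟩ := j'
        simp only at h1
        subst h1
        exact ⟨j', rfl, h, hw.symm⟩
  · intro j h1 h2
    by_cases hv : (Sum.inr (i, ⟨j, by omega⟩) : FlowerVert n m) ∈ M.verts
    · exact Or.inl ⟨j, ⟨by omega, hv⟩, by omega, by omega⟩
    obtain ⟨u, hu, hd⟩ := hD _ hv
    rw [flower_edist_two] at hd
    rcases hd with rfl | hd | ⟨w, hw1, hw2⟩
    · exact absurd hu hv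
    · rcases u with i' | ⟨i', j', hj'⟩
      · rw [flower_adj_uv] at hd
        simp only at hd
        omega
      · rw [flower_adj_vv] at hd
        simp only at hd
        obtain ⟨rfl, hd⟩ := hd
        exact Or.inl ⟨j', ⟨hj', hu⟩, by omega, by omega⟩
    · rcases w with i' | ⟨i', j', hj'⟩
      · rw [flower_adj_uv] at hw2
        simp only at hw2
        omega
      · rw [flower_adj_vv] at hw2
        simp only at hw2
        obtain ⟨rfl, hw2⟩ := hw2
        rcases u with i'' | ⟨i'', j'', hj''⟩
        · rw [flower_adj_uv] at hw1
          simp only at hw1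
          rcases hw1 with ⟨rfl, h3⟩ | ⟨rfl, h3⟩
          · exact Or.inr (Or.inl ⟨by omega, hu⟩)
          · exact Or.inr (Or.inr ⟨by omega, hu⟩)
        · rw [flower_adj_vv] at hw1
          simp only at hw1
          obtain ⟨rfl, hw1⟩ := hw1
          exact Or.inl ⟨j'', ⟨hj'', hu⟩, by omega, by omega⟩
  · intro h
    exact (hPL.1 h).fst_mem
  · intro h
    exact (hPR.1 h).fst_mem

lemma flower_lower (K p : ℕ) (hn : 3 ≤ n)
    (hp : (p = 2 ∧ m = 6 * K + 6) ∨ (p = 3 ∧ m = 6 * K + 5)) (D : Set (FlowerVert n m))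
    (hD : IsKDistPairedDominating (flowerGraph n m) 2 D) :
    2 * (n * K + (n + p - 1) / p) ≤ D.ncard := by
  classical
  have : NeZero n := ⟨by omega⟩
  have hm : 5 ≤ m := by omega
  obtain ⟨hdom, M, rfl, hM⟩ := hD
  have hdom' : ∀ v ∉ M.verts, ∃ u ∈ M.verts, (flowerGraph n m).edist u v ≤ 2 := by
    exact_mod_cast hdom
  have heven : Even M.verts.ncard := by
    have := hM.even_card
    rwa [Set.ncard_eq_toFinset_card']
  obtain ⟨e, he⟩ := heven
  let P : ZMod n → ℕ → Prop := fun i j => ∃ h : j < m - 2, Sum.inr (i, ⟨j, h⟩) ∈ M.verts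
  let d : ZMod n → ℕ := fun i => ((Finset.range (m - 2)).filter (P i)).card
  let x : ZMod n → ℕ := fun i => if Sum.inl i ∈ M.verts then 1 else 0
  have hcard : M.verts.ncard = ∑ i, (x i + d i) := by
    apply flower_card M.verts P
    intro i j
    simp [P]
  have hx1 : ∑ i : ZMod n, x (i + 1) = ∑ i, x i := Equiv.sum_comp (Equiv.addRight (1 : ZMod n)) x
  let pl : ZMod n → Prop := fun i => M.Adj (Sum.inl i) (Sum.inr (i, ⟨0, by omega⟩))
  let pr : ZMod n → Prop := fun i => M.Adj (Sum.inl (i + 1)) (Sum.inr (i, ⟨m - 3, by omega⟩))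
  have hpet : ∀ i, ∃ a, m - 4 ≤ 6 * a + x i + x (i + 1)
        + (if pl i then 1 else 0) + (if pr i then 1 else 0) ∧
      2 * a + (if pl i then 1 else 0) + (if pr i then 1 else 0) ≤ d i := fun i =>
    flower_petal hm M hM hdom' i (pl i) (pr i) Iff.rfl Iff.rfl
  have hplx : ∀ i, pl i → x i = 1 := fun i h => if_pos h.fst_mem
  have hprx : ∀ i, pr i → x (i + 1) = 1 := fun i h => if_pos h.fst_mem
  have hx01 : ∀ i, x i ≤ 1 := fun i => by simp only [x]; split_ifs <;> omega
  rcases hp with ⟨rfl, hmK⟩ | ⟨rfl, hmK⟩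
  · have key : ∀ i, 4 * K + 2 ≤ 2 * d i + x i + x (i + 1) := by
      intro i
      obtain ⟨a, h1, h2⟩ := hpet i
      have h3 := hplx i
      have h4 := hprx i
      have h5 := hx01 i
      have h6 := hx01 (i + 1)
      split_ifs at h1 h2 with h7 h8 h8
      · have := h3 h7
        have := h4 h8
        omega
      · have := h3 h7
        omega
      · have := h4 h8
        omega
      · omega
    have hs := Finset.sum_le_sum (fun i (_ : i ∈ Finset.univ) => key i)
    simp only [Finset.sum_add_distrib, ← Finset.mul_sum, hx1] at hs hcard
    simp only [Finset.sum_const, Finset.card_univ, ZMod.card, smul_eq_mul] at hs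
    have : n * (4 * K + 2) = 4 * (n * K) + 2 * n := by ring
    omega
  · let R : ZMod n → Prop := fun i => M.Adj (Sum.inl i) (Sum.inl (i + 1)) ∨ pl i
    let wR : ZMod n → ℕ := fun i => x i * (if R i then 1 else 2)
    let wL : ZMod n → ℕ := fun i => x i * (if R i then 2 else 1)
    have hw : ∀ i, wR i + wL i = 3 * x i := by
      intro i; simp only [wR, wL]; split_ifs <;> omega
    have hwR : ∀ i, x i ≤ wR i := by
      intro i; simp only [wR]; split_ifs <;> omega
    have hwL : ∀ i, x i ≤ wL i := by
      intro i; simp only [wL]; split_ifs <;> omega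
    have hA : ∀ i, x i = 1 → x (i + 1) = 0 → ¬ pl i → wR i = 2 := by
      intro i h1 h2 h3
      have : ¬ R i := by
        rintro (h | h)
        · have : x (i + 1) = 1 := if_pos h.snd_mem
          omega
        · exact h3 h
      simp only [wR, if_neg this, h1]
    have hB : ∀ i, x i = 0 → x (i + 1) = 1 → ¬ pr i → wL (i + 1) = 2 := by
      intro i h1 h2 h3
      have hmem : Sum.inl (i + 1) ∈ M.verts := by
        by_contra hc
        simp [x, hc] at h2
      have : R (i + 1) := by
        obtain ⟨w, hw, -⟩ := hM hmem
        have hadj := hw.adj_sub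
        rcases w with i' | ⟨i', j', hj'⟩
        · rw [flower_adj_uu hn] at hadj
          rcases hadj with rfl | h4
          · exact Or.inl hw
          · have h5 := add_right_cancel h4
            subst h5
            have : x i = 1 := if_pos hw.snd_mem
            omega
        · rw [flower_adj_uv] at hadj
          simp only at hadj
          rcases hadj with ⟨rfl, rfl⟩ | ⟨h4, rfl⟩
          · exact Or.inr hw
          · have h5 := add_right_cancel h4
            subst h5
            exact absurd hw h3
      simp only [wL, if_pos this, h2]
    have hwL1 : ∑ i : ZMod n, wL (i + 1) = ∑ i, wL i :=
      Equiv.sum_comp (Equiv.addRight (1 : ZMod n)) wL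
    have key : ∀ i, 6 * K + 2 ≤ 3 * d i + (wR i + wL (i + 1)) := by
      intro i
      obtain ⟨a, h1, h2⟩ := hpet i
      have h3 := hplx i
      have h4 := hprx i
      have h5 := hx01 i
      have h6 := hx01 (i + 1)
      have h9 := hA i
      have h10 := hB i
      have h11 := hwR i
      have h12 := hwL (i + 1)
      split_ifs at h1 h2 with h7 h8 h8
      · have := h3 h7
        have := h4 h8
        omega
      · have := h3 h7
        omega
      · have := h4 h8
        omega
      · rcases Nat.eq_zero_or_pos (x i) with h13 | h13 <;>
        rcases Nat.eq_zero_or_pos (x (i + 1)) with h14 | h14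
        · omega
        · have := h10 h13 (by omega) h8
          omega
        · have := h9 (by omega) h14 h7
          omega
        · omega
    have hs := Finset.sum_le_sum (fun i (_ : i ∈ Finset.univ) => key i)
    have hw' : ∑ i, wR i + ∑ i, wL i = 3 * ∑ i, x i := by
      rw [← Finset.sum_add_distrib, Finset.mul_sum]
      exact Finset.sum_congr rfl fun i _ => hw i
    simp only [Finset.sum_add_distrib, ← Finset.mul_sum, hwL1] at hs hcard
    simp only [Finset.sum_const, Finset.card_univ, ZMod.card, smul_eq_mul] at hs
    have : n * (6 * K + 2) = 6 * (n * K) + 2 * n := by ring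
    omega

lemma flower_matching {E V : Type*} [Fintype E] (G : SimpleGraph V) (a b : E → V)
    (hab : ∀ e, G.Adj (a e) (b e)) (ha : Function.Injective a) (hb : Function.Injective b)
    (hne : ∀ e e', a e ≠ b e') :
    (∃ M : G.Subgraph, M.verts = Set.range a ∪ Set.range b ∧ M.IsMatching) ∧
      (Set.range a ∪ Set.range b).ncard ≤ 2 * Fintype.card E := by
  constructor
  · refine ⟨{ verts := Set.range a ∪ Set.range b
              Adj := fun u v => ∃ e, (u = a e ∧ v = b e) ∨ (u = b e ∧ v = a e)
              adj_sub := ?_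
              edge_vert := ?_
              symm := ?_ }, rfl, ?_⟩
    · rintro u v ⟨e, ⟨rfl, rfl⟩ | ⟨rfl, rfl⟩⟩
      · exact hab e
      · exact (hab e).symm
    · rintro u v ⟨e, ⟨rfl, rfl⟩ | ⟨rfl, rfl⟩⟩
      · exact Or.inl ⟨e, rfl⟩
      · exact Or.inr ⟨e, rfl⟩
    · constructor
      rintro u v ⟨e, h | h⟩
      · exact ⟨e, Or.inr ⟨h.2, h.1⟩⟩
      · exact ⟨e, Or.inl ⟨h.2, h.1⟩⟩
    · rintro v (⟨e, rfl⟩ | ⟨e, rfl⟩)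
      · refine ⟨b e, ⟨e, Or.inl ⟨rfl, rfl⟩⟩, ?_⟩
        rintro w ⟨e', ⟨h1, h2⟩ | ⟨h1, h2⟩⟩
        · rw [h2, ha h1]
        · exact absurd h1 (hne _ _)
      · refine ⟨a e, ⟨e, Or.inr ⟨rfl, rfl⟩⟩, ?_⟩
        rintro w ⟨e', ⟨h1, h2⟩ | ⟨h1, h2⟩⟩
        · exact absurd h1.symm (hne _ _)
        · rw [h2, hb h1]
  · have h1 : ∀ f : E → V, (Set.range f).ncard ≤ Fintype.card E := by
      intro f
      rw [← Set.image_univ]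
      refine (Set.ncard_image_le Set.finite_univ).trans ?_
      rw [Set.ncard_univ, Nat.card_eq_fintype_card]
    have := Set.ncard_union_le (Set.range a) (Set.range b)
    have := h1 a
    have := h1 b
    omega

lemma flower_val_succ [NeZero n] (i : ZMod n) :
    ((i + 1).val = i.val + 1 ∧ i.val + 1 < n) ∨ ((i + 1).val = 0 ∧ i.val + 1 = n) := by
  have h := ZMod.val_lt i
  have h2 : i + 1 = ((i.val + 1 : ℕ) : ZMod n) := by
    push_cast
    rw [ZMod.natCast_zmod_val]
  rw [h2, ZMod.val_natCast]
  rcases Nat.lt_or_ge (i.val + 1) n with h3 | h3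
  · left
    exact ⟨Nat.mod_eq_of_lt h3, h3⟩
  · right
    have : i.val + 1 = n := by omega
    exact ⟨by rw [this, Nat.mod_self], this⟩

lemma flower_cast_inj {x y : ℕ} (hx : x < n) (hy : y < n) (h : (x : ZMod n) = y) : x = y := by
  have := congrArg ZMod.val h
  rwa [ZMod.val_cast_of_lt hx, ZMod.val_cast_of_lt hy] at this

lemma flower_upper (K p : ℕ) (hn : 3 ≤ n)
    (hp : (p = 2 ∧ m = 6 * K + 6) ∨ (p = 3 ∧ m = 6 * K + 5)) :
    ∃ D : Set (FlowerVert n m), IsKDistPairedDominating (flowerGraph n m) 2 D ∧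
      D.ncard ≤ 2 * (n * K + (n + p - 1) / p) := by
  classical
  have : NeZero n := ⟨by omega⟩
  let off : ZMod n → ℕ := fun i => if i.val % p = 2 then 3 else 4
  have hoff : ∀ i, off i = 3 ∨ off i = 4 := by
    intro i; simp only [off]; split_ifs <;> simp
  have hb0 : ∀ i (t : Fin K), off i + 6 * t.val + 1 < m - 2 := by
    intro i t
    have := hoff i
    have := t.isLt
    omega
  have hpe : ∀ e : Fin ((n + p - 1) / p), p * e.val < n := by
    intro e
    have := e.isLt
    rcases hp with ⟨rfl, _⟩ | ⟨rfl, _⟩ <;> omega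
  have hpos : 0 < m - 2 := by omega
  let a : ZMod n × Fin K ⊕ Fin ((n + p - 1) / p) → FlowerVert n m := fun e =>
    match e with
    | Sum.inl (i, t) => Sum.inr (i, ⟨off i + 6 * t.val, by have := hb0 i t; omega⟩)
    | Sum.inr e => Sum.inl ((p * e.val : ℕ) : ZMod n)
  let b : ZMod n × Fin K ⊕ Fin ((n + p - 1) / p) → FlowerVert n m := fun e =>
    match e with
    | Sum.inl (i, t) => Sum.inr (i, ⟨off i + 6 * t.val + 1, hb0 i t⟩)
    | Sum.inr e => if p * e.val + 1 < n then Sum.inl ((p * e.val + 1 : ℕ) : ZMod n)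
        else Sum.inr (((p * e.val : ℕ) : ZMod n), ⟨0, hpos⟩)
  have hab : ∀ e, (flowerGraph n m).Adj (a e) (b e) := by
    rintro (⟨i, t⟩ | e)
    · simp only [a, b]
      rw [flower_adj_vv]
      exact ⟨rfl, Or.inl rfl⟩
    · simp only [a, b]
      split_ifs
      · rw [flower_adj_uu hn]
        left
        push_cast
        rfl
      · rw [flower_adj_uv]
        exact Or.inl ⟨rfl, rfl⟩
  have hainj : Function.Injective a := by
    rintro (⟨i, t⟩ | e) (⟨i', t'⟩ | e') h
    · simp only [a, Sum.inr.injEq, Prod.mk.injEq, Fin.mk.injEq] at h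
      obtain ⟨rfl, h⟩ := h
      have : t = t' := by ext; omega
      rw [this]
    · simp [a] at h
    · simp [a] at h
    · simp only [a, Sum.inl.injEq] at h
      have h1 := flower_cast_inj (hpe e) (hpe e') h
      have : e = e' := by
        ext
        rcases hp with ⟨rfl, _⟩ | ⟨rfl, _⟩ <;> omega
      rw [this]
  have hbinj : Function.Injective b := by
    rintro (⟨i, t⟩ | e) (⟨i', t'⟩ | e') h
    · simp only [b, Sum.inr.injEq, Prod.mk.injEq, Fin.mk.injEq] at h
      obtain ⟨rfl, h⟩ := h
      have : t = t' := by ext; omega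
      rw [this]
    · simp only [b] at h
      split_ifs at h
      simp at h
    · simp only [b] at h
      split_ifs at h
      simp at h
    · simp only [b] at h
      have : e = e' := by
        split_ifs at h with h1 h2 h2
        · have h3 := flower_cast_inj h1 h2 (Sum.inl_injective h)
          ext
          rcases hp with ⟨rfl, _⟩ | ⟨rfl, _⟩ <;> omega
        · have := hpe e
          have := hpe e'
          ext
          rcases hp with ⟨rfl, _⟩ | ⟨rfl, _⟩ <;> omega
      rw [this]
  have hne : ∀ e e', a e ≠ b e' := by
    rintro (⟨i, t⟩ | e) (⟨i', t'⟩ | e') h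
    · simp only [a, b, Sum.inr.injEq, Prod.mk.injEq, Fin.mk.injEq] at h
      obtain ⟨rfl, h⟩ := h
      omega
    · simp only [a, b] at h
      split_ifs at h
      simp only [Sum.inr.injEq, Prod.mk.injEq, Fin.mk.injEq] at h
      have := hoff i
      omega
    · simp [a, b] at h
    · simp only [a, b] at h
      split_ifs at h with h1
      have := flower_cast_inj (hpe e) h1 (Sum.inl_injective h)
      rcases hp with ⟨rfl, _⟩ | ⟨rfl, _⟩ <;> omega
  obtain ⟨hM, hcard⟩ := flower_matching (flowerGraph n m) a b hab hainj hbinj hne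
  refine ⟨_, ⟨?_, hM⟩, hcard.trans ?_⟩
  swap
  · simp [ZMod.card]
  -- domination
  have hu : ∀ i : ZMod n, i.val % p ≠ 2 → Sum.inl i ∈ Set.range a ∪ Set.range b := by
    intro i hi
    have hlt := ZMod.val_lt i
    have he : i.val / p < (n + p - 1) / p := by
      rcases hp with ⟨rfl, _⟩ | ⟨rfl, _⟩ <;> omega
    have hcase : p * (i.val / p) = i.val ∨ p * (i.val / p) + 1 = i.val := by
      rcases hp with ⟨rfl, _⟩ | ⟨rfl, _⟩ <;> omega
    rcases hcase with h | h
    · left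
      refine ⟨Sum.inr ⟨_, he⟩, ?_⟩
      simp only [a]
      rw [h, ZMod.natCast_zmod_val]
    · right
      refine ⟨Sum.inr ⟨_, he⟩, ?_⟩
      simp only [b]
      rw [if_pos (by omega), h, ZMod.natCast_zmod_val]
  have hva : ∀ i t (j : Fin (m - 2)), t < K → j.val = off i + 6 * t →
      Sum.inr (i, j) ∈ Set.range a ∪ Set.range b := by
    intro i t j ht hj
    left
    refine ⟨Sum.inl (i, ⟨t, ht⟩), ?_⟩
    simp only [a, ← hj]
  have hvb : ∀ i t (j : Fin (m - 2)), t < K → j.val = off i + 6 * t + 1 →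
      Sum.inr (i, j) ∈ Set.range a ∪ Set.range b := by
    intro i t j ht hj
    right
    refine ⟨Sum.inl (i, ⟨t, ht⟩), ?_⟩
    simp only [b, ← hj]
  -- distances in a petal
  have near : ∀ i (j j' : Fin (m - 2)), j.val ≤ j'.val + 2 → j'.val ≤ j.val + 2 →
      (flowerGraph n m).edist (Sum.inr (i, j)) (Sum.inr (i, j')) ≤ 2 := by
    intro i j j' h1 h2
    rw [flower_edist_two]
    have hc : j.val = j'.val ∨ j'.val = j.val + 1 ∨ j.val = j'.val + 1 ∨
      j'.val = j.val + 2 ∨ j.val = j'.val + 2 := by omega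
    rcases hc with h | h | h | h | h
    · left; rw [Fin.ext h]
    · right; left; rw [flower_adj_vv]; exact ⟨rfl, Or.inl h⟩
    · right; left; rw [flower_adj_vv]; exact ⟨rfl, Or.inr h⟩
    · right; right
      refine ⟨Sum.inr (i, ⟨j.val + 1, by omega⟩), ?_, ?_⟩
      · rw [flower_adj_vv]; exact ⟨rfl, Or.inl rfl⟩
      · rw [flower_adj_vv]; exact ⟨rfl, Or.inl h⟩
    · right; right
      refine ⟨Sum.inr (i, ⟨j'.val + 1, by omega⟩), ?_, ?_⟩
      · rw [flower_adj_vv]; exact ⟨rfl, Or.inr h⟩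
      · rw [flower_adj_vv]; exact ⟨rfl, Or.inr rfl⟩
  have nearL : ∀ i (j : Fin (m - 2)), j.val ≤ 1 ∨ j.val = m - 3 →
      (flowerGraph n m).edist (Sum.inl i) (Sum.inr (i, j)) ≤ 2 := by
    intro i j hj
    rw [flower_edist_two]
    have hc : j.val = 0 ∨ j.val = 1 ∨ j.val = m - 3 := by omega
    rcases hc with h | h | h
    · right; left; rw [flower_adj_uv]; exact Or.inl ⟨rfl, h⟩
    · right; right
      refine ⟨Sum.inr (i, ⟨0, by omega⟩), ?_, ?_⟩
      · rw [flower_adj_uv]; exact Or.inl ⟨rfl, rfl⟩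
      · rw [flower_adj_vv]; exact ⟨rfl, Or.inl h⟩
    · right; right
      refine ⟨Sum.inl (i + 1), ?_, ?_⟩
      · rw [flower_adj_uu hn]; exact Or.inl rfl
      · rw [flower_adj_uv]; exact Or.inr ⟨rfl, h⟩
  have nearR : ∀ i (j : Fin (m - 2)), m - 4 ≤ j.val ∨ j.val = 0 →
      (flowerGraph n m).edist (Sum.inl (i + 1)) (Sum.inr (i, j)) ≤ 2 := by
    intro i j hj
    rw [flower_edist_two]
    have hc : j.val = m - 3 ∨ j.val + 1 = m - 3 ∨ j.val = 0 := by omega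
    rcases hc with h | h | h
    · right; left; rw [flower_adj_uv]; exact Or.inr ⟨rfl, h⟩
    · right; right
      refine ⟨Sum.inr (i, ⟨m - 3, by omega⟩), ?_, ?_⟩
      · rw [flower_adj_uv]; exact Or.inr ⟨rfl, rfl⟩
      · rw [flower_adj_vv]; exact ⟨rfl, Or.inr h.symm⟩
    · right; right
      refine ⟨Sum.inl i, ?_, ?_⟩
      · rw [flower_adj_uu hn]; exact Or.inr rfl
      · rw [flower_adj_uv]; exact Or.inl ⟨rfl, h⟩
  have inner : ∀ i (j : Fin (m - 2)), off i ≤ j.val + 2 → j.val + 2 < off i + 6 * K →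
      ∃ u ∈ Set.range a ∪ Set.range b, (flowerGraph n m).edist u (Sum.inr (i, j)) ≤ 2 := by
    intro i j h1 h2
    have ho := hoff i
    have ht : (j.val + 2 - off i) / 6 < K := by omega
    have hlt := hb0 i ⟨_, ht⟩
    simp only at hlt
    by_cases hr : (j.val + 2 - off i) % 6 ≤ 2
    · refine ⟨_, hva i _ ⟨off i + 6 * ((j.val + 2 - off i) / 6), by omega⟩ ht rfl, ?_⟩
      apply near
      · simp only; omega
      · simp only; omega
    · refine ⟨_, hvb i _ ⟨off i + 6 * ((j.val + 2 - off i) / 6) + 1, by omega⟩ ht rfl, ?_⟩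
      apply near
      · simp only; omega
      · simp only; omega
  rintro (i | ⟨i, j⟩) -
  · by_cases hi : i.val % p = 2
    · have hvs := flower_val_succ (i - 1)
      rw [sub_add_cancel] at hvs
      have hpi : (i - 1).val % p ≠ 2 := by
        rcases hvs with ⟨h1, _⟩ | ⟨h1, _⟩
        · rcases hp with ⟨rfl, _⟩ | ⟨rfl, _⟩ <;> omega
        · rcases hp with ⟨rfl, _⟩ | ⟨rfl, _⟩ <;> omega
      refine ⟨_, hu _ hpi, ?_⟩
      refine (flower_edist_two _ _ _).2 (Or.inr (Or.inl ?_))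
      rw [flower_adj_uu hn]
      left
      ring
    · exact ⟨_, hu i hi, by simp⟩
  · have hjlt := j.isLt
    have hvs := flower_val_succ i
    by_cases hi : i.val % p = 2
    · have ho : off i = 3 := if_pos hi
      have hi1 : (i + 1).val % p ≠ 2 := by
        rcases hvs with ⟨h1, _⟩ | ⟨h1, _⟩ <;>
        rcases hp with ⟨rfl, _⟩ | ⟨rfl, _⟩ <;> omega
      have hm5 : m = 6 * K + 5 := by
        rcases hp with ⟨rfl, _⟩ | ⟨rfl, _⟩ <;> omega
      by_cases hj : m - 4 ≤ j.val ∨ j.val = 0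
      · exact ⟨_, hu _ hi1, nearR i j hj⟩
      · exact inner i j (by omega) (by omega)
    · have ho : off i = 4 := if_neg hi
      by_cases hj : j.val ≤ 1 ∨ j.val = m - 3
      · exact ⟨_, hu _ hi, nearL i j hj⟩
      · by_cases hj2 : j.val + 2 < off i + 6 * K
        · exact inner i j (by omega) hj2
        · have hi1 : (i + 1).val % p ≠ 2 := by
            rcases hp with ⟨rfl, _⟩ | ⟨rfl, _⟩ <;> omega
          exact ⟨_, hu _ hi1, nearR i j (by omega)⟩

lemma flower_main (K p : ℕ) (hn : 3 ≤ n)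
    (hp : (p = 2 ∧ m = 6 * K + 6) ∨ (p = 3 ∧ m = 6 * K + 5)) :
    kDistPairedDomNum (flowerGraph n m) 2 = 2 * (n * K + (n + p - 1) / p) := by
  obtain ⟨D, hD, hc⟩ := flower_upper K p hn hp
  apply le_antisymm
  · have h1 : kDistPairedDomNum (flowerGraph n m) 2 ≤ D.ncard := Nat.sInf_le ⟨D, hD, rfl⟩
    exact h1.trans hc
  · obtain ⟨D', hD', hc'⟩ := Nat.sInf_mem (s := {c | ∃ D : Set (FlowerVert n m),
      IsKDistPairedDominating (flowerGraph n m) 2 D ∧ D.ncard = c}) ⟨_, D, hD, rfl⟩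
    have := flower_lower K p hn hp D' hD'
    rw [hc'] at this
    exact this

end aux

theorem flower_twoDistPairedDomNum_mod6_05 (n m : ℕ) (hn : 3 ≤ n) (hm : 3 ≤ m)
    (h : m % 6 = 0 ∨ m % 6 = 5) :
    (kDistPairedDomNum (flowerGraph n m) 2 : ℤ) = 2 * ⌈((n : ℚ) * m - 3 * n) / 6⌉ := by
  rcases h with h | h
  · obtain ⟨K, rfl⟩ : ∃ K, m = 6 * K + 6 := ⟨m / 6 - 1, by omega⟩
    rw [flower_main K 2 hn (Or.inl ⟨rfl, rfl⟩)]
    have hc : ⌈((n : ℚ) * (6 * K + 6 : ℕ) - 3 * n) / 6⌉ = ((n * K + (n + 2 - 1) / 2 : ℕ) : ℤ) := by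
      have h1 : n ≤ 2 * ((n + 2 - 1) / 2) := by omega
      have h2 : 2 * ((n + 2 - 1) / 2) ≤ n + 1 := by omega
      have h1' : (n : ℚ) ≤ 2 * ((n + 2 - 1) / 2 : ℕ) := by exact_mod_cast h1
      have h2' : 2 * (((n + 2 - 1) / 2 : ℕ) : ℚ) ≤ n + 1 := by exact_mod_cast h2
      generalize (n + 2 - 1) / 2 = c at *
      rw [Int.ceil_eq_iff]
      push_cast
      constructor <;> linarith
    rw [hc]
    push_cast
    rfl
  · obtain ⟨K, rfl⟩ : ∃ K, m = 6 * K + 5 := ⟨m / 6, by omega⟩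
    rw [flower_main K 3 hn (Or.inr ⟨rfl, rfl⟩)]
    have hc : ⌈((n : ℚ) * (6 * K + 5 : ℕ) - 3 * n) / 6⌉ = ((n * K + (n + 3 - 1) / 3 : ℕ) : ℤ) := by
      have h1 : n ≤ 3 * ((n + 3 - 1) / 3) := by omega
      have h2 : 3 * ((n + 3 - 1) / 3) ≤ n + 2 := by omega
      have h1' : (n : ℚ) ≤ 3 * ((n + 3 - 1) / 3 : ℕ) := by exact_mod_cast h1
      have h2' : 3 * (((n + 3 - 1) / 3 : ℕ) : ℚ) ≤ n + 2 := by exact_mod_cast h2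
      generalize (n + 3 - 1) / 3 = c at *
      rw [Int.ceil_eq_iff]
      push_cast
      constructor <;> linarith
    rw [hc]
    push_cast
    rfl
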